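/- Let F be a finite field of odd order q, and define nmExt(x, y) = χ(x + y) where χ is the quadratic character of F. Then for any k, nmExt is a (k, ε)-non-malleable extractor with one-bit output, where ε = 2·q^{1/4}·2^{1-k/2} (i.e., ε = 4·q^{1/4}·2^{-k/2}), in the sense that for any source X on F with H_∞(X) ≥ k, Y uniform on F independent of X, and any A : F → F with A(y) ≠ y for all y, the distribution (χ(X+Y), χ(X+A(Y)), Y) is ε-close to (U, χ(X+A(Y)), Y) with U a uniform sign independent of the rest. -/

import Mathlib

section Stepanov
open Polynomial

lemma st_c1 {F : Type*} [Field F] (f : F[X]) (hf : f.natDegree ≤ 4) (i : ℕ) :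
    ∃ c : F[X], c.natDegree ≤ 3 * i ∧ f ^ i * hasseDeriv i f = f * c := by
  rcases i with _ | i
  · exact ⟨1, by simp, by simp⟩
  · by_cases hi : f.natDegree < i + 1
    · refine ⟨0, by simp, ?_⟩
      rw [hasseDeriv_eq_zero_of_lt_natDegree _ _ hi]; simp
    · refine ⟨f ^ i * hasseDeriv (i+1) f, ?_, by ring⟩
      have h1 := natDegree_hasseDeriv_le f (i+1)
      have h2 : (f ^ i).natDegree ≤ i * f.natDegree := natDegree_pow_le
      have h3 := natDegree_mul_le (p := f ^ i) (q := hasseDeriv (i+1) f)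
      have : i * f.natDegree ≤ i * 4 := Nat.mul_le_mul_left _ hf
      omega

lemma st_c {F : Type*} [Field F] (f : F[X]) (hf : f.natDegree ≤ 4) (n i : ℕ) :
    ∃ c : F[X], c.natDegree ≤ 3 * i ∧ f ^ i * hasseDeriv i (f ^ n) = f ^ n * c := by
  induction n generalizing i with
  | zero =>
    rcases i with _ | i
    · exact ⟨1, by simp, by simp⟩
    · refine ⟨0, by simp, ?_⟩
      rw [pow_zero, hasseDeriv_eq_zero_of_lt_natDegree _ _ (by simp)]; simp
  | succ n ih =>
    choose c1 h1 h1' using st_c1 f hf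
    choose c2 h2 h2' using ih
    refine ⟨∑ ab ∈ Finset.HasAntidiagonal.antidiagonal i, c1 ab.1 * c2 ab.2, ?_, ?_⟩
    · apply natDegree_sum_le_of_forall_le
      intro ab hab
      have := Finset.HasAntidiagonal.mem_antidiagonal.1 hab
      have h3 := natDegree_mul_le (p := c1 ab.1) (q := c2 ab.2)
      have := h1 ab.1
      have := h2 ab.2
      omega
    · rw [pow_succ', hasseDeriv_mul, Finset.mul_sum, Finset.mul_sum]
      refine Finset.sum_congr rfl fun ab hab => ?_
      rw [← Finset.HasAntidiagonal.mem_antidiagonal.1 hab, pow_add]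
      calc _ = (f ^ ab.1 * hasseDeriv ab.1 f) * (f ^ ab.2 * hasseDeriv ab.2 (f ^ n)) := by ring
        _ = _ := by rw [h1', h2']; ring

/-- The cofactor operator. -/
lemma st_L {F : Type*} [Field F] (f : F[X]) (hf : f.natDegree ≤ 4) (n k : ℕ) :
    ∃ L : F[X] →ₗ[F] F[X], ∀ u, (L u).natDegree ≤ 3 * k + u.natDegree ∧
      f ^ k * hasseDeriv k (f ^ n * u) = f ^ n * L u := by
  choose c h h' using st_c f hf n
  refine ⟨∑ ab ∈ Finset.HasAntidiagonal.antidiagonal k,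
    (LinearMap.mulLeft F (c ab.1 * f ^ ab.2)) ∘ₗ hasseDeriv ab.2, fun u => ⟨?_, ?_⟩⟩
  · rw [LinearMap.sum_apply]
    apply natDegree_sum_le_of_forall_le
    intro ab hab
    have := Finset.HasAntidiagonal.mem_antidiagonal.1 hab
    simp only [LinearMap.comp_apply, LinearMap.mulLeft_apply]
    by_cases hi : u.natDegree < ab.2
    · rw [hasseDeriv_eq_zero_of_lt_natDegree _ _ hi]; simp
    have h1 := natDegree_hasseDeriv_le u ab.2
    have h2 : (f ^ ab.2).natDegree ≤ ab.2 * f.natDegree := natDegree_pow_le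
    have h3 := natDegree_mul_le (p := c ab.1 * f ^ ab.2) (q := hasseDeriv ab.2 u)
    have h4 := natDegree_mul_le (p := c ab.1) (q := f ^ ab.2)
    have h5 : ab.2 * f.natDegree ≤ ab.2 * 4 := Nat.mul_le_mul_left _ hf
    have := h ab.1
    omega
  · rw [LinearMap.sum_apply, hasseDeriv_mul, Finset.mul_sum, Finset.mul_sum]
    refine Finset.sum_congr rfl fun ab hab => ?_
    simp only [LinearMap.comp_apply, LinearMap.mulLeft_apply]
    rw [← Finset.HasAntidiagonal.mem_antidiagonal.1 hab, pow_add]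
    calc _ = (f ^ ab.1 * hasseDeriv ab.1 (f ^ n)) * (f ^ ab.2 * hasseDeriv ab.2 u) := by ring
        _ = _ := by rw [h']; ring

lemma st_lin {F : Type*} [Field F] (J d l M : ℕ) (P R : ℕ → F[X] →ₗ[F] F[X])
    (h : l * M < 2 * (J * (d + 1))) :
    ∃ r s : Fin J → F[X], (∀ j, (r j).natDegree ≤ d) ∧ (∀ j, (s j).natDegree ≤ d) ∧
      ¬ (r = 0 ∧ s = 0) ∧ ∀ k < l, ∀ i < M,
        (∑ j : Fin J, X ^ (j : ℕ) * (P k (r j) + R k (s j))).coeff i = 0 := by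
  let V := (Fin J → degreeLT F (d+1)) × (Fin J → degreeLT F (d+1))
  have e := degreeLTEquiv F (d+1)
  have : FiniteDimensional F (degreeLT F (d+1)) := Module.Finite.equiv e.symm
  have hd : Module.finrank F (degreeLT F (d+1)) = d + 1 := by
    rw [e.finrank_eq]; simp
  let T : V →ₗ[F] (Fin l → Fin M → F) :=
    LinearMap.pi fun k => LinearMap.pi fun i => lcoeff F i ∘ₗ
      (∑ j : Fin J, LinearMap.mulLeft F (X ^ (j : ℕ)) ∘ₗ
        (P k ∘ₗ (degreeLT F (d+1)).subtype ∘ₗ LinearMap.proj j ∘ₗ LinearMap.fst F _ _ +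
         R k ∘ₗ (degreeLT F (d+1)).subtype ∘ₗ LinearMap.proj j ∘ₗ LinearMap.snd F _ _))
  have hT : LinearMap.ker T ≠ ⊥ := by
    apply LinearMap.ker_ne_bot_of_finrank_lt
    simp only [V, Module.finrank_prod, Module.finrank_pi_fintype, hd, Module.finrank_self]
    simp
    omega
  obtain ⟨v, hv, hv0⟩ := (Submodule.ne_bot_iff _).1 hT
  have hnd : ∀ p : degreeLT F (d+1), (p : F[X]).natDegree ≤ d := fun p => by
    have := mem_degreeLT.1 p.2
    by_cases h0 : (p : F[X]) = 0
    · simp [h0]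
    · exact Nat.lt_succ_iff.1 ((natDegree_lt_iff_degree_lt h0).2 (mem_degreeLT.1 p.2))
  refine ⟨fun j => v.1 j, fun j => v.2 j, fun j => hnd _, fun j => hnd _, ?_, ?_⟩
  · rintro ⟨h1, h2⟩
    apply hv0
    refine Prod.ext ?_ ?_
    · funext j; exact Subtype.ext (congrFun h1 j)
    · funext j; exact Subtype.ext (congrFun h2 j)
  · intro k hk i hi
    have := congrFun (congrFun (LinearMap.mem_ker.1 hv) ⟨k, hk⟩) ⟨i, hi⟩
    simp only [T, LinearMap.pi_apply, LinearMap.comp_apply, LinearMap.sum_apply, LinearMap.add_apply, LinearMap.mulLeft_apply, lcoeff_apply] at this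
    exact this

lemma st_base {F : Type*} [Field F] [Fintype F] (hodd : Odd (Fintype.card F)) (f : F[X])
    (hf : f.natDegree ≤ 4) (h0 : f.eval 0 ≠ 0) (α : F) (hα : f.rootMultiplicity α = 1)
    (d : ℕ) (hd : 2 * d + 4 < Fintype.card F) (r s : F[X]) (hr : r.natDegree ≤ d)
    (hs : s.natDegree ≤ d)
    (h : X ^ Fintype.card F ∣ r + f ^ (Fintype.card F / 2) * s) : r = 0 ∧ s = 0 := by
  set q := Fintype.card F with hq
  have hf0 : f ≠ 0 := by rintro rfl; simp at h0
  have h1 : X ^ q ∣ f ^ q - C (f.eval 0) := by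
    have ee := FiniteField.expand_card f
    rw [← hq] at ee
    rw [← ee]
    have : X ∣ f - C (f.eval 0) := by rw [X_dvd_iff]; simp [coeff_zero_eq_eval_zero]
    obtain ⟨w, hw⟩ := this
    have := congrArg (expand F q) hw
    rw [map_sub, expand_C, map_mul, expand_X] at this
    exact Dvd.intro _ this.symm
  have hqq : q = q / 2 + q / 2 + 1 := by have := Nat.odd_iff.1 hodd; omega
  have h2 : X ^ q ∣ r ^ 2 * f - C (f.eval 0) * s ^ 2 := by
    have : r ^ 2 * f - C (f.eval 0) * s ^ 2 =
      (r + f ^ (q / 2) * s) * ((r - f ^ (q/2) * s) * f) + s ^ 2 * (f ^ q - C (f.eval 0)) := by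
      conv_rhs => rw [show f ^ q = f ^ (q/2) * f ^ (q/2) * f by
        rw [← pow_add, ← pow_succ, ← hqq]]
      ring
    rw [this]
    exact dvd_add (h.mul_right _) (h1.mul_left _)
  have h3 : r ^ 2 * f - C (f.eval 0) * s ^ 2 = 0 := by
    apply eq_zero_of_dvd_of_natDegree_lt h2
    rw [natDegree_X_pow]
    refine lt_of_le_of_lt (natDegree_sub_le _ _) (max_lt ?_ ?_)
    · have := natDegree_mul_le (p := r ^ 2) (q := f)
      have := natDegree_pow_le (p := r) (n := 2)
      omega
    · have := natDegree_C_mul_le (f.eval 0) (s ^ 2)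
      have := natDegree_pow_le (p := s) (n := 2)
      omega
  have h4 := sub_eq_zero.1 h3
  by_cases hs0 : s = 0
  · subst hs0
    simpa [hf0] using h4
  · exfalso
    have hC : C (f.eval 0) ≠ 0 := by simpa using h0
    have hr0 : r ≠ 0 := by
      rintro rfl
      simp [hs0, h0] at h4
    have := congrArg (rootMultiplicity α) h4
    rw [rootMultiplicity_mul (by positivity), rootMultiplicity_mul (by positivity), pow_two, pow_two,
      rootMultiplicity_mul (by positivity), rootMultiplicity_mul (by positivity), rootMultiplicity_C, hα] at this
    omega

lemma st_nonvan {F : Type*} [Field F] [Fintype F] (hodd : Odd (Fintype.card F)) (f : F[X])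
    (hf : f.natDegree ≤ 4) (h0 : f.eval 0 ≠ 0) (α : F) (hα : f.rootMultiplicity α = 1)
    (d : ℕ) (hd : 2 * d + 4 < Fintype.card F) (J : ℕ) (r s : Fin J → F[X])
    (hr : ∀ j, (r j).natDegree ≤ d) (hs : ∀ j, (s j).natDegree ≤ d)
    (h : ∑ j : Fin J, (r j + f ^ (Fintype.card F / 2) * s j) * (X ^ Fintype.card F) ^ (j : ℕ) = 0) :
    r = 0 ∧ s = 0 := by
  induction J with
  | zero => exact ⟨Subsingleton.elim _ _, Subsingleton.elim _ _⟩
  | succ J ih =>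
    rw [Fin.sum_univ_succ] at h
    have e : ∑ j : Fin J, (r j.succ + f ^ (Fintype.card F / 2) * s j.succ) *
        (X ^ Fintype.card F) ^ (j.succ : ℕ) = X ^ Fintype.card F *
        ∑ j : Fin J, (r j.succ + f ^ (Fintype.card F / 2) * s j.succ) *
        (X ^ Fintype.card F) ^ (j : ℕ) := by
      rw [Finset.mul_sum]
      refine Finset.sum_congr rfl fun j _ => ?_
      rw [Fin.val_succ, pow_succ]; ring
    rw [e] at h
    simp only [Fin.val_zero, pow_zero, mul_one] at h
    have hb := st_base hodd f hf h0 α hα d hd (r 0) (s 0) (hr 0) (hs 0)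
      ⟨_, (eq_neg_of_add_eq_zero_left h).trans (mul_neg _ _).symm⟩
    rw [hb.1, hb.2] at h
    simp only [mul_zero, add_zero, zero_add] at h
    have h' := (mul_eq_zero.1 h).resolve_left (pow_ne_zero _ X_ne_zero)
    have := ih (fun j => r j.succ) (fun j => s j.succ) (fun j => hr _) (fun j => hs _) h'
    refine ⟨?_, ?_⟩
    · funext j; exact Fin.cases hb.1 (fun j => congrFun this.1 j) j
    · funext j; exact Fin.cases hb.2 (fun j => congrFun this.2 j) j

/-- Counting by Stepanov's method, parametric form. -/
lemma st_count {F : Type*} [Field F] [Fintype F] (hodd : Odd (Fintype.card F)) (f : F[X])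
    (hf : f.natDegree ≤ 4) (h0 : f.eval 0 ≠ 0) (α : F) (hα : f.rootMultiplicity α = 1)
    (d J l : ℕ) (hd : 2 * d + 4 < Fintype.card F) (hl : l ≤ Fintype.card F)
    (hJ : l * (d + 3 * l + J) < 2 * (J * (d + 1))) (a : F) (ha : a ≠ 0)
    (S : Finset F) (hS : ∀ x ∈ S, f.eval x ^ (Fintype.card F / 2) = a) :
    l * S.card ≤ d + 4 * (Fintype.card F / 2) + (J - 1) * Fintype.card F := by
  set q := Fintype.card F with hq
  choose L0 hL0 using st_L f hf 0
  choose L1 hL1 using st_L f hf (q / 2)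
  obtain ⟨r, s, hr, hs, hne, hz⟩ := st_lin J d l (d + 3 * l + J) L0 (fun k => a • L1 k) hJ
  set R : F[X] := ∑ j : Fin J, (r j + f ^ (q / 2) * s j) * (X ^ q) ^ (j : ℕ) with hR
  have hR0 : R ≠ 0 := fun h => hne (st_nonvan hodd f hf h0 α hα d hd J r s hr hs h)
  have hRd : R.natDegree ≤ d + 4 * (q / 2) + (J - 1) * q := by
    apply natDegree_sum_le_of_forall_le
    intro j _
    refine natDegree_mul_le.trans (Nat.add_le_add ?_ ?_)
    · refine (natDegree_add_le _ _).trans (max_le ?_ ?_)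
      · have := hr j; omega
      · have := hs j
        have h1 := natDegree_mul_le (p := f ^ (q/2)) (q := s j)
        have h2 : (f ^ (q/2)).natDegree ≤ (q/2) * f.natDegree := natDegree_pow_le
        have h3 : (q/2) * f.natDegree ≤ (q/2) * 4 := Nat.mul_le_mul_left _ hf
        omega
    · rw [← pow_mul, natDegree_X_pow, mul_comm]
      exact Nat.mul_le_mul_right _ (by omega)
  have hQ : ∀ k < l, ∑ j : Fin J, X ^ (j : ℕ) * (L0 k (r j) + (a • L1 k) (s j)) = 0 := by
    intro k hk
    ext i
    rw [coeff_zero]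
    by_cases hi : i < d + 3 * l + J
    · exact hz k hk i hi
    · apply coeff_eq_zero_of_natDegree_lt
      refine lt_of_le_of_lt (b := d + 3 * k + J) ?_ (lt_of_lt_of_le (b := d + 3 * l + J) ?_ (not_lt.1 hi))
      · apply natDegree_sum_le_of_forall_le
        intro j _
        refine natDegree_mul_le.trans ?_
        rw [natDegree_X_pow]
        have h1 := natDegree_add_le (L0 k (r j)) ((a • L1 k) (s j))
        have h2 := (hL0 k (r j)).1
        have h3 := (hL1 k (s j)).1
        have h4 : ((a • L1 k) (s j)).natDegree ≤ (L1 k (s j)).natDegree := natDegree_smul_le _ _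
        have := hr j
        have := hs j
        have := j.2
        omega
      · omega
  have hdvd : ∀ x ∈ S, (X - C x) ^ l ∣ R := by
    intro x hx
    have hfx : f.eval x ≠ 0 := by
      intro h
      have := hS x hx
      rw [h, zero_pow (by have := Nat.odd_iff.1 hodd; omega)] at this
      exact ha this.symm
    set R' : F[X] := ∑ j : Fin J, C (x ^ (j : ℕ)) * (r j + f ^ (q / 2) * s j) with hR'
    have h1 : (X - C x) ^ l ∣ R - R' := by
      rw [hR, hR', ← Finset.sum_sub_distrib]
      refine Finset.dvd_sum fun j _ => ?_
      have e : (X - C x) ^ q = X ^ q - C x := by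
        rw [← FiniteField.expand_card]; simp [hq]
      have h2 : (X - C x) ^ l ∣ (X ^ q - C x : F[X]) := e ▸ pow_dvd_pow _ hl
      have h3 := h2.trans (sub_dvd_pow_sub_pow (X ^ q) (C x) (j : ℕ))
      rw [C_pow]
      have : (r j + f ^ (q / 2) * s j) * (X ^ q) ^ (j : ℕ) - C x ^ (j : ℕ) * (r j + f ^ (q / 2) * s j)
        = ((X ^ q) ^ (j : ℕ) - C x ^ (j : ℕ)) * (r j + f ^ (q / 2) * s j) := by ring
      rw [this]
      exact h3.mul_right _
    have h2 : (X - C x) ^ l ∣ R' := by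
      rw [X_sub_C_pow_dvd_iff, X_pow_dvd_iff]
      intro k hk
      rw [← taylor_apply, taylor_coeff]
      have hk' := congrArg (eval x) (hQ k hk)
      have : f.eval x ^ k * eval x (hasseDeriv k R') = 0 := by
        rw [eval_zero] at hk'
        rw [← hk', ← eval_pow, ← eval_mul, hR', map_sum, Finset.mul_sum, eval_finsetSum,
          eval_finsetSum]
        refine Finset.sum_congr rfl fun j _ => ?_
        have e0 := (hL0 k (r j)).2
        have e1 := (hL1 k (s j)).2
        rw [pow_zero, one_mul, one_mul] at e0
        rw [← smul_eq_C_mul, map_smul, map_add, mul_smul_comm, mul_add, e0, e1]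
        simp [hS x hx]; ring
      exact (mul_eq_zero.1 this).resolve_left (pow_ne_zero _ hfx)
    have := dvd_add h1 h2
    rwa [sub_add_cancel] at this
  have hprod : ∏ x ∈ S, (X - C x) ^ l ∣ R := by
    apply Finset.prod_dvd_of_coprime _ hdvd
    intro x _ y _ hxy
    exact (pairwise_coprime_X_sub_C (s := id) Function.injective_id hxy).pow
  have := natDegree_le_of_dvd hprod hR0
  rw [natDegree_prod _ _ (fun x _ => pow_ne_zero _ (X_sub_C_ne_zero x))] at this
  simp only [natDegree_pow, natDegree_X_sub_C, mul_one, Finset.sum_const, smul_eq_mul] at this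
  rw [mul_comm] at this
  exact this.trans hRd

lemma st_sum0 {F : Type*} [Field F] [Fintype F] [DecidableEq F] (hodd : Odd (Fintype.card F))
    (hbig : 256 ≤ Fintype.card F) (f : F[X])
    (hf : f.natDegree ≤ 4) (h0 : f.eval 0 ≠ 0) (α : F) (hα : f.rootMultiplicity α = 1) :
    |∑ x : F, quadraticChar F (f.eval x)| ≤ 14 * (Nat.sqrt (Fintype.card F) : ℤ) := by
  have hchar : ringChar F ≠ 2 := by
    intro h
    have := FiniteField.even_card_iff_char_two.1 h
    have := Nat.odd_iff.1 hodd
    omega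
  have hf0 : f ≠ 0 := by rintro rfl; simp at h0
  set q := Fintype.card F with hq
  set n := Nat.sqrt q with hn
  have hn1 : n * n ≤ q := Nat.sqrt_le q
  have hn2 : q < (n+1) * (n+1) := Nat.lt_succ_sqrt q
  have hn16 : 16 ≤ n := Nat.le_sqrt.2 (by omega)
  have hqo := Nat.odd_iff.1 hodd
  have key : ∀ (a : F) (S : Finset F), a ≠ 0 →
      (∀ x ∈ S, f.eval x ^ (q / 2) = a) → 2 * (n * S.card) + 5 ≤ (n + 12) * q := by
    intro a S ha hS
    obtain ⟨J, hJ⟩ : ∃ J, J = (n + 9) / 2 := ⟨_, rfl⟩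
    obtain ⟨d, hd⟩ : ∃ d, d = (q - 5) / 2 := ⟨_, rfl⟩
    have hd' : 2 * d + 5 = q := by omega
    have hJ1 : n + 8 ≤ 2 * J := by omega
    have hJ2 : 2 * (J - 1) ≤ n + 7 := by omega
    have := st_count hodd f hf h0 α hα d J n (by omega) (by nlinarith) (by
      zify at *
      have e : (q:ℤ) - 3 - n ≥ 0 := by nlinarith
      nlinarith [mul_le_mul_of_nonneg_right hJ1 e]) a ha S hS
    have h3 : 2 * (J - 1) * q ≤ (n + 7) * q := Nat.mul_le_mul_right _ hJ2
    rw [← hq] at this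
    have h4 : 2 * (q / 2) ≤ q := by omega
    nlinarith
  set S1 := Finset.univ.filter (fun x : F => quadraticChar F (f.eval x) = 1) with hS1
  set S2 := Finset.univ.filter (fun x : F => quadraticChar F (f.eval x) = -1) with hS2
  set S0 := Finset.univ.filter (fun x : F => f.eval x = 0) with hS0
  have k1 := key 1 S1 one_ne_zero (by
    intro x hx
    rw [← quadraticChar_eq_pow_of_char_ne_two' hchar, (Finset.mem_filter.1 hx).2]; simp)
  have k2 := key (-1) S2 (by simp) (by
    intro x hx
    rw [← quadraticChar_eq_pow_of_char_ne_two' hchar, (Finset.mem_filter.1 hx).2]; simp)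
  have k0 : S0.card ≤ 4 := by
    refine le_trans ?_ ((card_roots' f).trans hf)
    refine le_trans (Finset.card_le_card ?_) (Multiset.toFinset_card_le _)
    intro x hx
    rw [Multiset.mem_toFinset, mem_roots hf0]
    exact (Finset.mem_filter.1 hx).2
  have hpt : ∀ x : F, quadraticChar F (f.eval x) =
      (if quadraticChar F (f.eval x) = 1 then 1 else 0) - (if quadraticChar F (f.eval x) = -1 then 1 else 0)
      ∧ (1 : ℤ) = (if quadraticChar F (f.eval x) = 1 then 1 else 0) + (if quadraticChar F (f.eval x) = -1 then 1 else 0) + (if f.eval x = 0 then 1 else 0) := by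
    intro x
    by_cases h : f.eval x = 0
    · simp [h]
    · rcases quadraticChar_dichotomy h with h' | h' <;> simp [h', h]
  have hsum : ∑ x : F, quadraticChar F (f.eval x) = (S1.card : ℤ) - S2.card := by
    rw [Finset.sum_congr rfl fun x _ => (hpt x).1, Finset.sum_sub_distrib]
    simp [S1, S2]
  have htot : (q : ℤ) = S1.card + S2.card + S0.card := by
    have : (q : ℤ) = ∑ x : F, (1 : ℤ) := by simp [hq]
    rw [this, Finset.sum_congr rfl fun x _ => (hpt x).2, Finset.sum_add_distrib, Finset.sum_add_distrib]
    simp [S1, S2, S0]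
  rw [hsum]
  zify at k1 k2 k0 hn1 hn2 hn16
  have hpos : (0 : ℤ) < n := by linarith
  have g0 : (n : ℤ) * S0.card ≤ n * 4 := mul_le_mul_of_nonneg_left k0 hpos.le
  have ht : (n : ℤ) * q = n * S1.card + n * S2.card + n * S0.card := by rw [htot]; ring
  rw [abs_le]
  constructor
  · apply le_of_mul_le_mul_left _ hpos
    nlinarith
  · apply le_of_mul_le_mul_left _ hpos
    nlinarith

lemma st_sum {F : Type*} [Field F] [Fintype F] [DecidableEq F] (hodd : Odd (Fintype.card F))
    (hbig : 256 ≤ Fintype.card F) (f : F[X])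
    (hf : f.natDegree ≤ 4) (α : F) (hα : f.rootMultiplicity α = 1) :
    |∑ x : F, quadraticChar F (f.eval x)| ≤ 14 * (Nat.sqrt (Fintype.card F) : ℤ) := by
  have hf0 : f ≠ 0 := by rintro rfl; simp at hα
  obtain ⟨t, ht⟩ : ∃ t, f.eval t ≠ 0 := by
    by_contra! h
    have : Finset.univ.card ≤ f.roots.toFinset.card := Finset.card_le_card (fun x _ => by
      rw [Multiset.mem_toFinset, mem_roots hf0]; exact h x)
    have := this.trans ((Multiset.toFinset_card_le _).trans ((card_roots' f).trans hf))
    rw [Finset.card_univ] at this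
    omega
  have := st_sum0 hodd hbig (f.comp (X + C t)) (by
      rw [natDegree_comp]; simpa using hf) (by simpa using ht) (α - t) (by
      have h := rootMultiplicity_eq_rootMultiplicity (p := f) (t := α)
      have h' := rootMultiplicity_eq_rootMultiplicity (p := f.comp (X + C t)) (t := α - t)
      rw [h', comp_assoc, ← hα, h]
      congr 2
      simp; ring) 
  rw [← Equiv.sum_comp (Equiv.addRight t)]
  simpa using this

lemma st_simple {F : Type*} [Field F] [Fintype F] [DecidableEq F] (hodd : Odd (Fintype.card F))
    (hbig : 256 ≤ Fintype.card F) (g : F[X]) (hg : g.natDegree ≤ 3) (b : F) (hb : g.eval (-b) ≠ 0) :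
    |∑ x : F, ((quadraticChar F ((x + b) * g.eval x) : ℤ) : ℝ)| ≤ 14 * Real.sqrt (Fintype.card F) := by
  have hg0 : g ≠ 0 := by rintro rfl; simp at hb
  have h := st_sum hodd hbig ((X - C (-b)) * g) (by
    rw [natDegree_mul (X_sub_C_ne_zero _) hg0, natDegree_X_sub_C]; omega) (-b) (by
    rw [rootMultiplicity_mul (mul_ne_zero (X_sub_C_ne_zero _) hg0), rootMultiplicity_X_sub_C_self,
      rootMultiplicity_eq_zero hb])
  have h2 : (Nat.sqrt (Fintype.card F) : ℝ) ≤ Real.sqrt (Fintype.card F) := Real.nat_sqrt_le_real_sqrt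
  have h3 : ((|∑ x : F, quadraticChar F (((X - C (-b)) * g).eval x)| : ℤ) : ℝ) ≤
    14 * (Nat.sqrt (Fintype.card F) : ℝ) := by exact_mod_cast h
  simp only [eval_mul, eval_sub, eval_X, eval_C, sub_neg_eq_add] at h3
  push_cast at h3 ⊢
  linarith

lemma st_S {F : Type*} [Fintype F] [DecidableEq F] (μ : F → ℝ) (hμ0 : ∀ x, 0 ≤ μ x)
    (hμ1 : ∑ x, μ x = 1) (K s : ℝ) (hK : ∀ x, μ x ≤ K) (hs : 2 ≤ s) (A : F → F)
    (B : F → F → ℝ) (hB : ∀ y x, |B y x| ≤ 1)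
    (h : ∀ y y', y' ≠ y → y' ≠ A y → |∑ x, B y x * B y' x| ≤ 14 * s) :
    (∑ y, |∑ x, μ x * B y x|) ^ 2 ≤ 15 * (Fintype.card F : ℝ) ^ 2 * s * K := by
  set q : ℝ := (Fintype.card F : ℝ) with hq
  have hK0 : 0 ≤ K := by
    by_contra! hc
    have : ∑ x, μ x ≤ 0 := Finset.sum_nonpos fun x _ => (hK x).trans hc.le
    linarith
  set θ : F → ℝ := fun y => SignType.sign (∑ x, μ x * B y x) with hθ
  have hθ1 : ∀ y, |θ y| ≤ 1 := by
    intro y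
    simp only [hθ]
    cases SignType.sign (∑ x, μ x * B y x) <;> simp
  have e1 : ∑ y, |∑ x, μ x * B y x| = ∑ x, μ x * ∑ y, θ y * B y x := by
    simp_rw [Finset.mul_sum]
    rw [Finset.sum_comm]
    refine Finset.sum_congr rfl fun y _ => ?_
    rw [← sign_mul_self (∑ x, μ x * B y x), Finset.mul_sum]
    refine Finset.sum_congr rfl fun x _ => ?_
    simp only [hθ]; ring
  have e2 : ∑ x, μ x ^ 2 ≤ K := by
    calc ∑ x, μ x ^ 2 ≤ ∑ x, K * μ x := Finset.sum_le_sum fun x _ => by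
          nlinarith [hμ0 x, hK x]
      _ = K := by rw [← Finset.mul_sum, hμ1, mul_one]
  have hq0 : 0 ≤ q := by simp [hq]
  have e4 : ∀ y y', |∑ x, B y x * B y' x| ≤
      (if y' = y then q else 0) + (if y' = A y then q else 0) + 14 * s := by
    intro y y'
    have ht : |∑ x, B y x * B y' x| ≤ q := by
      refine (Finset.abs_sum_le_sum_abs _ _).trans ?_
      have : ∑ x : F, |B y x * B y' x| ≤ ∑ x : F, (1 : ℝ) := Finset.sum_le_sum fun x _ => by
        rw [abs_mul]; exact mul_le_one₀ (hB _ _) (abs_nonneg _) (hB _ _)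
      simpa [hq] using this
    by_cases h1 : y' = y
    · rw [if_pos h1]
      split_ifs <;> linarith
    · by_cases h2 : y' = A y
      · rw [if_pos h2, if_neg h1]; linarith
      · rw [if_neg h1, if_neg h2]; linarith [h y y' h1 h2]
  have e3 : ∑ x, (∑ y, θ y * B y x) ^ 2 ≤ 15 * q ^ 2 * s := by
    have : ∑ x, (∑ y, θ y * B y x) ^ 2 = ∑ y, ∑ y', θ y * θ y' * ∑ x, B y x * B y' x := by
      simp_rw [pow_two, Finset.sum_mul_sum, Finset.mul_sum]
      rw [Finset.sum_comm]
      refine Finset.sum_congr rfl fun y _ => ?_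
      rw [Finset.sum_comm]
      refine Finset.sum_congr rfl fun y' _ => Finset.sum_congr rfl fun x _ => ?_
      ring
    rw [this]
    calc _ ≤ ∑ y : F, ∑ y' : F, ((if y' = y then q else 0) + (if y' = A y then q else 0) + 14 * s) := by
          refine Finset.sum_le_sum fun y _ => Finset.sum_le_sum fun y' _ => ?_
          refine (le_abs_self _).trans (le_trans ?_ (e4 y y'))
          rw [abs_mul, abs_mul]
          have : |θ y| * |θ y'| ≤ 1 := mul_le_one₀ (hθ1 _) (abs_nonneg _) (hθ1 _)
          exact mul_le_of_le_one_left (abs_nonneg _) this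
      _ = q * (2 * q + q * (14 * s)) := by
          simp [Finset.sum_add_distrib, ← hq]; ring
      _ ≤ _ := by nlinarith [mul_nonneg hq0 hq0]
  rw [e1]
  refine (Finset.sum_mul_sq_le_sq_mul_sq _ _ _).trans ?_
  calc _ ≤ K * (15 * q ^ 2 * s) := mul_le_mul e2 e3 (Finset.sum_nonneg fun _ _ => sq_nonneg _) hK0
    _ = _ := by ring

end Stepanov

open Finset
open scoped Classical

lemma st_pt {F : Type*} [Field F] [Fintype F] [DecidableEq F]
    (μ : F → ℝ) (hμ0 : ∀ x, 0 ≤ μ x) (hμ1 : ∑ x, μ x = 1) (y a : F) (E : ℝ)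
    (hE : E = ∑ u ∈ ({-1, 0, 1} : Finset ℤ), ∑ v ∈ ({-1, 0, 1} : Finset ℤ),
        |(∑ x ∈ Finset.univ.filter
            (fun x : F => quadraticChar F (x + y) = u ∧ quadraticChar F (x + a) = v), μ x)  -
          (if u = 1 ∨ u = -1 then (1 : ℝ) / 2 else 0) *
            (∑ x ∈ Finset.univ.filter (fun x : F => quadraticChar F (x + a) = v), μ x)|) :
    E ≤ 2 ∧ E ≤ |∑ x, μ x * ((quadraticChar F (x + y) : ℤ) : ℝ)| +
      |∑ x, μ x * (((quadraticChar F (x + y) : ℤ) : ℝ) * ((quadraticChar F (x + a) : ℤ) : ℝ))|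
      + 2 * μ (-y) + 2 * μ (-a) := by
  set p : ℤ → ℤ → ℝ := fun u v => ∑ x ∈ Finset.univ.filter
            (fun x : F => quadraticChar F (x + y) = u ∧ quadraticChar F (x + a) = v), μ x with hp
  have hp0 : ∀ u v, 0 ≤ p u v := fun u v => Finset.sum_nonneg fun x _ => hμ0 x
  have tri : ∀ z : F, quadraticChar F z = -1 ∨ quadraticChar F z = 0 ∨ quadraticChar F z = 1 := by
    intro z
    by_cases h : z = 0
    · simp [h]
    · rcases quadraticChar_dichotomy h with h | h <;> simp [h]
  have hv : ∀ v, ∑ x ∈ Finset.univ.filter (fun x : F => quadraticChar F (x + a) = v), μ x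
      = p (-1) v + p 0 v + p 1 v := by
    intro v
    simp only [hp, Finset.sum_filter, ← Finset.sum_add_distrib]
    refine Finset.sum_congr rfl fun x _ => ?_
    rcases tri (x + y) with h | h | h <;> simp [h]
  have hu : ∀ u, ∑ x ∈ Finset.univ.filter (fun x : F => quadraticChar F (x + y) = u), μ x
      = p u (-1) + p u 0 + p u 1 := by
    intro u
    simp only [hp, Finset.sum_filter, ← Finset.sum_add_distrib]
    refine Finset.sum_congr rfl fun x _ => ?_
    rcases tri (x + a) with h | h | h <;> simp [h]
  have hz : ∀ b : F, ∑ x ∈ Finset.univ.filter (fun x : F => quadraticChar F (x + b) = 0), μ x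
      = μ (-b) := by
    intro b
    have : Finset.univ.filter (fun x : F => quadraticChar F (x + b) = 0) = {-b} := by
      ext x
      rw [Finset.mem_filter, Finset.mem_singleton, quadraticChar_eq_zero_iff, eq_neg_iff_add_eq_zero]; simp
    rw [this, Finset.sum_singleton]
  have hy : μ (-y) = p 0 (-1) + p 0 0 + p 0 1 := by rw [← hz, hu]
  have ha : μ (-a) = p (-1) 0 + p 0 0 + p 1 0 := by rw [← hz, hv]
  have h1 : 1 = (p (-1) (-1) + p 0 (-1) + p 1 (-1)) + (p (-1) 0 + p 0 0 + p 1 0) +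
      (p (-1) 1 + p 0 1 + p 1 1) := by
    rw [← hv, ← hv, ← hv, ← hμ1]
    simp only [Finset.sum_filter, ← Finset.sum_add_distrib]
    refine Finset.sum_congr rfl fun x _ => ?_
    rcases tri (x + a) with h | h | h <;> simp [h]
  have s0 : ∑ x, μ x * ((quadraticChar F (x + y) : ℤ) : ℝ) =
      (p 1 (-1) + p 1 0 + p 1 1) - (p (-1) (-1) + p (-1) 0 + p (-1) 1) := by
    rw [← hu, ← hu]
    simp only [Finset.sum_filter, ← Finset.sum_sub_distrib]
    refine Finset.sum_congr rfl fun x _ => ?_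
    rcases tri (x + y) with h | h | h <;> simp [h]
  have s1 : ∑ x, μ x * (((quadraticChar F (x + y) : ℤ) : ℝ) * ((quadraticChar F (x + a) : ℤ) : ℝ)) =
      p 1 1 + p (-1) (-1) - p 1 (-1) - p (-1) 1 := by
    simp only [hp, Finset.sum_filter, ← Finset.sum_sub_distrib, ← Finset.sum_add_distrib]
    refine Finset.sum_congr rfl fun x _ => ?_
    rcases tri (x + y) with h | h | h <;> rcases tri (x + a) with h' | h' | h' <;> simp [h, h']
  have hpu : ∀ u v, ∑ x ∈ Finset.univ.filter (fun x : F => quadraticChar F (x + y) = u ∧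
      quadraticChar F (x + a) = v), μ x = p u v := fun _ _ => rfl
  simp only [hv, hpu] at hE
  rw [s0, s1, hy, ha]
  have hE' : E = (|p (-1) (-1) - 1/2 * (p (-1) (-1) + p 0 (-1) + p 1 (-1))| +
      (|p (-1) 0 - 1/2 * (p (-1) 0 + p 0 0 + p 1 0)| + |p (-1) 1 - 1/2 * (p (-1) 1 + p 0 1 + p 1 1)|)) +
      ((p 0 (-1) + (p 0 0 + p 0 1)) +
      (|p 1 (-1) - 1/2 * (p (-1) (-1) + p 0 (-1) + p 1 (-1))| +
      (|p 1 0 - 1/2 * (p (-1) 0 + p 0 0 + p 1 0)| + |p 1 1 - 1/2 * (p (-1) 1 + p 0 1 + p 1 1)|))) := by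
    rw [hE]
    have n1 : (-1 : ℤ) ∉ ({0, 1} : Finset ℤ) := by decide
    have n2 : (0 : ℤ) ∉ ({1} : Finset ℤ) := by decide
    simp only [Finset.sum_insert n1, Finset.sum_insert n2, Finset.sum_singleton]
    norm_num
    rw [abs_of_nonneg (hp0 0 (-1)), abs_of_nonneg (hp0 0 0), abs_of_nonneg (hp0 0 1)]
  clear_value p
  clear hE hv hu hz hpu
  have a1 : ∀ P N Z : ℝ, 0 ≤ P → 0 ≤ N → 0 ≤ Z → 
      |N - 1/2 * (N + Z + P)| + |P - 1/2 * (N + Z + P)| ≤ P + N + Z := by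
    intro P N Z hP hN hZ
    rcases abs_cases (N - 1/2 * (N + Z + P)) with h | h <;>
    rcases abs_cases (P - 1/2 * (N + Z + P)) with h' | h' <;> linarith
  have a2 : ∀ P N Z : ℝ, 0 ≤ P → 0 ≤ N → 0 ≤ Z → 
      |N - 1/2 * (N + Z + P)| + |P - 1/2 * (N + Z + P)| ≤ |P - N| + Z := by
    intro P N Z hP hN hZ
    rcases abs_cases (N - 1/2 * (N + Z + P)) with h | h <;>
    rcases abs_cases (P - 1/2 * (N + Z + P)) with h' | h' <;>
    rcases abs_cases (P - N) with h'' | h'' <;> linarith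
  have b := hp0 0 (-1)
  have b0 := hp0 0 0
  have b1 := hp0 0 1
  have c := hp0 (-1) (-1)
  have c0 := hp0 (-1) 0
  have c1 := hp0 (-1) 1
  have d := hp0 1 (-1)
  have d0 := hp0 1 0
  have d1 := hp0 1 1
  constructor
  · have := a1 (p 1 (-1)) (p (-1) (-1)) (p 0 (-1)) d c b
    have := a1 (p 1 0) (p (-1) 0) (p 0 0) d0 c0 b0
    have := a1 (p 1 1) (p (-1) 1) (p 0 1) d1 c1 b1
    linarith
  · have := a2 (p 1 (-1)) (p (-1) (-1)) (p 0 (-1)) d c b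
    have := a1 (p 1 0) (p (-1) 0) (p 0 0) d0 c0 b0
    have := a2 (p 1 1) (p (-1) 1) (p 0 1) d1 c1 b1
    have : |p 1 (-1) - p (-1) (-1)| + |p 1 1 - p (-1) 1| ≤
      |(p 1 (-1) + p 1 0 + p 1 1) - (p (-1) (-1) + p (-1) 0 + p (-1) 1)| + (p 1 0 + p (-1) 0) +
      |p 1 1 + p (-1) (-1) - p 1 (-1) - p (-1) 1| := by
      rcases abs_cases (p 1 (-1) - p (-1) (-1)) with h | h <;>
      rcases abs_cases (p 1 1 - p (-1) 1) with h' | h' <;>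
      rcases abs_cases ((p 1 (-1) + p 1 0 + p 1 1) - (p (-1) (-1) + p (-1) 0 + p (-1) 1)) with h2 | h2 <;>
      rcases abs_cases (p 1 1 + p (-1) (-1) - p 1 (-1) - p (-1) 1) with h3 | h3 <;> linarith
    linarith

/-- Let F be a finite field of odd order q and χ the quadratic character
of F (χ(x) = x^{(q-1)/2} ∈ {-1,0,1}, χ(0)=0). Define nmExt(x,y) = χ(x+y). Then for any
source X on F with H∞(X) ≥ k, Y uniform on F independent of X, and any A : F → F with
A(y) ≠ y for all y, the distribution (χ(X+Y), χ(X+A(Y)), Y) is ε-close to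
(U, χ(X+A(Y)), Y) with U a uniform sign independent of the rest, where
ε = 2·q^{1/4}·2^{1-k/2} = 4·q^{1/4}·2^{-k/2}. -/
theorem stmt_15 {F : Type*} [Field F] [Fintype F] [DecidableEq F]
    (hodd : Odd (Fintype.card F))
    (k : ℝ) (μ : F → ℝ) (hμ0 : ∀ x, 0 ≤ μ x) (hμ1 : ∑ x, μ x = 1)
    (hk : ∀ x, μ x ≤ (2 : ℝ) ^ (-k))
    (A : F → F) (hA : ∀ y, A y ≠ y) :
    (∑ u ∈ ({-1, 0, 1} : Finset ℤ), ∑ v ∈ ({-1, 0, 1} : Finset ℤ), ∑ y : F,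
        |(∑ x ∈ Finset.univ.filter
            (fun x : F => quadraticChar F (x + y) = u ∧ quadraticChar F (x + A y) = v),
              μ x) / (Fintype.card F : ℝ) -
          (if u = 1 ∨ u = -1 then (1 : ℝ) / 2 else 0) *
            (∑ x ∈ Finset.univ.filter (fun x : F => quadraticChar F (x + A y) = v),
              μ x) / (Fintype.card F : ℝ)|) / 2 ≤
      4 * (Fintype.card F : ℝ) ^ ((1 : ℝ)/4) * (2 : ℝ) ^ (-k / 2) := by
  set q : ℝ := (Fintype.card F : ℝ) with hq
  have hq0 : 0 < q := by simp [hq, Fintype.card_pos]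
  set E : F → ℝ := fun y => ∑ u ∈ ({-1, 0, 1} : Finset ℤ), ∑ v ∈ ({-1, 0, 1} : Finset ℤ),
        |(∑ x ∈ Finset.univ.filter
            (fun x : F => quadraticChar F (x + y) = u ∧ quadraticChar F (x + A y) = v), μ x)  -
          (if u = 1 ∨ u = -1 then (1 : ℝ) / 2 else 0) *
            (∑ x ∈ Finset.univ.filter (fun x : F => quadraticChar F (x + A y) = v), μ x)| with hE
  have hpt := fun y => st_pt μ hμ0 hμ1 y (A y) (E y) rfl
  have hL : (∑ u ∈ ({-1, 0, 1} : Finset ℤ), ∑ v ∈ ({-1, 0, 1} : Finset ℤ), ∑ y : F,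
        |(∑ x ∈ Finset.univ.filter
            (fun x : F => quadraticChar F (x + y) = u ∧ quadraticChar F (x + A y) = v),
              μ x) / q -
          (if u = 1 ∨ u = -1 then (1 : ℝ) / 2 else 0) *
            (∑ x ∈ Finset.univ.filter (fun x : F => quadraticChar F (x + A y) = v),
              μ x) / q|) = (∑ y, E y) / q := by
    simp only [← sub_div, abs_div, abs_of_pos hq0, ← Finset.sum_div]
    congr 1
    rw [hE, Finset.sum_comm]
    rw [Finset.sum_congr rfl fun v _ => Finset.sum_comm]
    rw [Finset.sum_comm]
    refine Finset.sum_congr rfl fun y _ => ?_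
    rw [Finset.sum_comm]
  rw [hL]
  clear hL
  set K : ℝ := (2 : ℝ) ^ (-k) with hK
  set s : ℝ := Real.sqrt q with hs
  have hss : s * s = q := Real.mul_self_sqrt hq0.le
  have hs0 : 0 < s := Real.sqrt_pos.2 hq0
  set w : ℝ := q ^ ((1 : ℝ)/4) * (2 : ℝ) ^ (-k / 2) with hw
  have hw0 : 0 < w := by positivity
  have hww : w * w = s * K := by
    rw [hw, hs, hK, Real.sqrt_eq_rpow, mul_mul_mul_comm, ← Real.rpow_add hq0,
      ← Real.rpow_add (by norm_num : (0:ℝ) < 2)]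
    congr 2 <;> ring
  rw [mul_assoc, ← hw]
  clear_value E w K
  have hqK : 1 ≤ q * K := by
    rw [← hμ1]
    calc ∑ x, μ x ≤ ∑ x : F, K := Finset.sum_le_sum fun x _ => hk x
      _ = q * K := by simp [hq]
  by_cases hc : 1 / 4 ≤ w
  · have : (∑ y, E y) ≤ 2 * q := by
      calc ∑ y, E y ≤ ∑ y : F, (2 : ℝ) := Finset.sum_le_sum fun y _ => (hpt y).1
        _ = 2 * q := by simp [hq, mul_comm]
    have : (∑ y, E y) / q ≤ 2 := by rw [div_le_iff₀ hq0]; exact this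
    linarith
  push Not at hc
  have hK0 : 0 < K := by
    by_contra! h
    nlinarith
  have hs16 : 16 ≤ s := by
    have h1 : w * w < 1 / 16 := by nlinarith
    rw [hww] at h1
    nlinarith
  have hbig : 256 ≤ Fintype.card F := by
    have : (256 : ℝ) ≤ q := by nlinarith
    rw [hq] at this
    exact_mod_cast this
  have habs : ∀ z : F, |((quadraticChar F z : ℤ) : ℝ)| ≤ 1 := by
    intro z
    by_cases h : z = 0
    · simp [h]
    · rcases quadraticChar_dichotomy h with h | h <;> simp [h]
  have S0 := st_S μ hμ0 hμ1 K s hk (by linarith) A (fun y x => ((quadraticChar F (x + y) : ℤ) : ℝ))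
    (fun y x => habs _) (by
      intro y y' h1 h2
      have := st_simple hodd hbig (Polynomial.X + Polynomial.C y) (by simp) y' (by
        simpa [neg_add_eq_zero] using h1)
      simp only [Polynomial.eval_add, Polynomial.eval_X, Polynomial.eval_C, map_mul] at this
      refine le_of_eq_of_le ?_ this
      congr 1
      refine Finset.sum_congr rfl fun x _ => ?_
      push_cast; ring)
  have S1 := st_S μ hμ0 hμ1 K s hk (by linarith) A
    (fun y x => ((quadraticChar F (x + y) : ℤ) : ℝ) * ((quadraticChar F (x + A y) : ℤ) : ℝ))
    (fun y x => by
      rw [abs_mul]; exact mul_le_one₀ (habs _) (abs_nonneg _) (habs _)) (by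
      intro y y' h1 h2
      have := st_simple hodd hbig ((Polynomial.X + Polynomial.C y) *
          (Polynomial.X + Polynomial.C (A y)) * (Polynomial.X + Polynomial.C (A y'))) (by
          compute_degree) y' (by
        simp only [Polynomial.eval_mul, Polynomial.eval_add, Polynomial.eval_X, Polynomial.eval_C]
        refine mul_ne_zero (mul_ne_zero ?_ ?_) ?_
        · simpa [neg_add_eq_zero] using h1
        · simpa [neg_add_eq_zero] using h2
        · simpa [neg_add_eq_zero] using (hA y').symm)
      simp only [Polynomial.eval_mul, Polynomial.eval_add, Polynomial.eval_X, Polynomial.eval_C,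
        map_mul] at this
      refine le_of_eq_of_le ?_ this
      congr 1
      refine Finset.sum_congr rfl fun x _ => ?_
      push_cast; ring)
  have root : ∀ T : ℝ, T ^ 2 ≤ 15 * q ^ 2 * s * K → T ≤ 388 / 100 * (q * w) := by
    intro T hT
    apply le_of_sq_le_sq _ (by positivity)
    have e : (388 / 100 * (q * w)) ^ 2 = (388 / 100) ^ 2 * q ^ 2 * (s * K) := by rw [← hww]; ring
    rw [e]
    have : 0 ≤ q ^ 2 * (s * K) := by positivity
    nlinarith
  have T0 := root _ S0
  have T1 := root _ S1
  have hsum : ∑ y, E y ≤ 2 * (388 / 100 * (q * w)) + 2 + 2 * (q * K) := by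
    refine (Finset.sum_le_sum fun y _ => (hpt y).2).trans ?_
    rw [Finset.sum_add_distrib, Finset.sum_add_distrib, Finset.sum_add_distrib, ← Finset.mul_sum,
      ← Finset.mul_sum]
    have m1 : ∑ y, μ (-y) = 1 := by rw [← hμ1]; exact Equiv.sum_comp (Equiv.neg F) μ
    have m2 : ∑ y, μ (-A y) ≤ q * K := by
      calc ∑ y, μ (-A y) ≤ ∑ y : F, K := Finset.sum_le_sum fun x _ => hk _
        _ = q * K := by simp [hq]
    linarith
  have hKw : K ≤ w / 64 := by
    have : 16 * K ≤ w * w := by rw [hww]; nlinarith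
    nlinarith
  have : (∑ y, E y) / q ≤ 8 * w := by
    rw [div_le_iff₀ hq0]
    have : q * K ≤ q * (w / 64) := mul_le_mul_of_nonneg_left hKw hq0.le
    have : 0 < q * w := by positivity
    linarith
  linarith
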